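/- arXiv:1410.2588 — 2 statements merged into one kernel-verified Lean document; each statement's English description precedes it below -/
import Mathlib

section
/- Let ρ ∈ L¹(0,1) with ρ(x) > 0 for a.e. x ∈ (0,1), and let θ₀ ∈ (−π/2, π/2]. For each λ ≥ 1 there exists a unique absolutely continuous function θ_λ : [0,1] → ℝ with θ_λ(0) = θ₀ and θ_λ'(x) = cos²θ_λ(x) + λ ρ(x) sin²θ_λ(x) for a.e. x ∈ (0,1). Moreover, θ_λ(1) → +∞ as λ → +∞. -/
open MeasureTheory Set Filter Topology Real

lemma ac_comp {U G : ℝ → ℝ} {a b : ℝ} (hU : AbsolutelyContinuousOnInterval U a b) {C : ℝ}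
    (hC : 0 ≤ C)
    (hG : ∀ x ∈ uIcc a b, ∀ y ∈ uIcc a b, |G (U x) - G (U y)| ≤ C * |U x - U y|) :
    AbsolutelyContinuousOnInterval (fun x => G (U x)) a b := by
  rw [absolutelyContinuousOnInterval_iff] at hU ⊢
  intro ε hε
  obtain ⟨δ, hδ, h⟩ := hU (ε / (C + 1)) (by positivity)
  refine ⟨δ, hδ, fun E hE hd => ?_⟩
  have h1 := h E hE hd
  calc _ ≤ ∑ i ∈ Finset.range E.1, C * dist (U (E.2 i).1) (U (E.2 i).2) := by
        refine Finset.sum_le_sum fun i hi => ?_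
        have := hE.1 i hi
        simpa [Real.dist_eq] using hG _ this.1 _ this.2
    _ = C * ∑ i ∈ Finset.range E.1, dist (U (E.2 i).1) (U (E.2 i).2) := by
        rw [Finset.mul_sum]
    _ ≤ C * (ε / (C + 1)) := by gcongr
    _ < ε := by
        rw [mul_div_assoc', div_lt_iff₀ (by positivity)]
        nlinarith

lemma chain_int {f : ℝ → ℝ} (hf : Integrable f) (c : ℝ) {G g : ℝ → ℝ}
    (hG : ∀ y, HasDerivAt G (g y) y) (hg : Continuous g) (x : ℝ) :
    ∫ t in (0:ℝ)..x, g (c + ∫ s in (0:ℝ)..t, f s) * f t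
      = G (c + ∫ s in (0:ℝ)..x, f s) - G c := by
  set U : ℝ → ℝ := fun t => c + ∫ s in (0:ℝ)..t, f s with hUdef
  have hUac : AbsolutelyContinuousOnInterval U 0 x := by
    have h1 := (hf.intervalIntegrable (a := 0) (b := x)).absolutelyContinuousOnInterval_intervalIntegral
      (c := 0) (by simp)
    have h2 : AbsolutelyContinuousOnInterval (fun _ : ℝ => c) 0 x := by
      rw [absolutelyContinuousOnInterval_iff]
      intro ε hε
      exact ⟨1, one_pos, fun E _ _ => by simpa using hε⟩
    exact h2.add h1
  obtain ⟨M, hM⟩ := hUac.exists_bound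
  obtain ⟨C, hC⟩ := (isCompact_Icc (a := -M) (b := M)).exists_bound_of_continuousOn hg.continuousOn
  have hmem : ∀ t ∈ uIcc 0 x, U t ∈ Icc (-M) M := fun t ht => by
    have := hM t ht
    rw [Real.norm_eq_abs] at this
    exact abs_le.1 this
  have hC0 : 0 ≤ C := (norm_nonneg _).trans (hC (U 0) (hmem 0 (by simp)))
  have hV : AbsolutelyContinuousOnInterval (fun t => G (U t)) 0 x := by
    refine ac_comp hUac hC0 fun s hs t ht => ?_
    have := (convex_Icc (-M) M).norm_image_sub_le_of_norm_hasDerivWithin_le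
      (f := G) (f' := g) (C := C) (fun y _ => (hG y).hasDerivWithinAt) hC (hmem t ht) (hmem s hs)
    simpa using this
  have h0 : U 0 = c := by simp [hUdef]
  have := hV.integral_deriv_eq_sub
  rw [h0] at this
  rw [← this]
  apply intervalIntegral.integral_congr_ae
  filter_upwards [LocallyIntegrable.ae_hasDerivAt_integral hf.locallyIntegrable] with t ht _
  have h3 : HasDerivAt U (f t) t := (ht 0).const_add c
  exact (((hG (U t)).comp t h3).deriv).symm

lemma picard_L1 {F : ℝ → ℝ → ℝ} {k : ℝ → ℝ} (hk : Integrable k) (hk0 : ∀ t, 0 ≤ k t)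
    (hF : ∀ u : ℝ → ℝ, Continuous u → Integrable (fun t => F t (u t)))
    (hL : ∀ t y z, |F t y - F t z| ≤ k t * |y - z|) (c : ℝ) :
    ∃ u : ℝ → ℝ, Continuous u ∧
      (∀ x ∈ Icc (0:ℝ) 1, u x = c + ∫ t in (0:ℝ)..x, F t (u t)) ∧
      ∀ ψ : ℝ → ℝ, ContinuousOn ψ (Icc (0:ℝ) 1) →
        (∀ x ∈ Icc (0:ℝ) 1, ψ x = c + ∫ t in (0:ℝ)..x, F t (ψ t)) →
        ∀ x ∈ Icc (0:ℝ) 1, ψ x = u x := by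
  set K : ℝ → ℝ := fun x => ∫ s in (0:ℝ)..x, k s with hK
  have hKc : Continuous K :=
    intervalIntegral.continuous_primitive (fun a b => hk.intervalIntegrable) 0
  have hexp : ∀ x, ∫ t in (0:ℝ)..x, 2 * Real.exp (2 * K t) * k t = Real.exp (2 * K x) - 1 := by
    intro x
    have := chain_int hk 0 (G := fun y => Real.exp (2 * y)) (g := fun y => 2 * Real.exp (2 * y))
      (fun y => by
        have := ((hasDerivAt_id y).const_mul 2).exp
        simpa [mul_comm] using this) (by fun_prop) x
    simpa [hK] using this
  -- extension
  let ext : C(Icc (0:ℝ) 1, ℝ) → ℝ → ℝ := fun w t =>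
    Real.exp (2 * K t) * w (projIcc 0 1 zero_le_one t)
  have extc : ∀ w, Continuous (ext w) := fun w => by
    have : Continuous fun t => w (projIcc 0 1 zero_le_one t) := w.continuous.comp continuous_projIcc
    fun_prop
  let S : C(Icc (0:ℝ) 1, ℝ) → C(Icc (0:ℝ) 1, ℝ) := fun w =>
    ⟨fun x => Real.exp (-(2 * K x)) * (c + ∫ t in (0:ℝ)..x, F t (ext w t)), by
      have : Continuous fun x => ∫ t in (0:ℝ)..x, F t (ext w t) :=
        intervalIntegral.continuous_primitive (fun a b => (hF _ (extc w)).intervalIntegrable) 0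
      fun_prop⟩
  have hS : ContractingWith (1/2) S := by
    refine ⟨by rw [← NNReal.coe_lt_coe]; norm_num, LipschitzWith.of_dist_le_mul fun w v => ?_⟩
    rw [ContinuousMap.dist_le (by positivity)]
    rintro ⟨x, hx⟩
    have e1 : dist (S w ⟨x, hx⟩) (S v ⟨x, hx⟩) = Real.exp (-(2 * K x)) *
        |∫ t in (0:ℝ)..x, (F t (ext w t) - F t (ext v t))| := by
      rw [intervalIntegral.integral_sub (hF _ (extc w)).intervalIntegrable
        (hF _ (extc v)).intervalIntegrable, Real.dist_eq]
      simp only [S, ContinuousMap.coe_mk]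
      rw [← mul_sub, abs_mul, abs_of_pos (Real.exp_pos _)]
      congr 2; ring
    have e2 : |∫ t in (0:ℝ)..x, (F t (ext w t) - F t (ext v t))| ≤
        ∫ t in (0:ℝ)..x, (dist w v / 2) * (2 * Real.exp (2 * K t) * k t) := by
      rw [← Real.norm_eq_abs]
      refine intervalIntegral.norm_integral_le_of_norm_le hx.1 ?_ ?_
      · refine Eventually.of_forall fun t _ => ?_
        rw [Real.norm_eq_abs]
        refine (hL t _ _).trans ?_
        have : |ext w t - ext v t| ≤ Real.exp (2 * K t) * dist w v := by
          simp only [ext]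
          rw [← mul_sub, abs_mul, abs_of_pos (Real.exp_pos _)]
          gcongr
          rw [← Real.dist_eq]
          exact ContinuousMap.dist_apply_le_dist _
        calc _ ≤ k t * (Real.exp (2 * K t) * dist w v) :=
              mul_le_mul_of_nonneg_left this (hk0 t)
          _ = _ := by ring
      · apply IntervalIntegrable.const_mul
        exact (hk.intervalIntegrable).continuousOn_mul (by fun_prop)
    rw [intervalIntegral.integral_const_mul, hexp] at e2
    rw [e1]
    calc _ ≤ Real.exp (-(2 * K x)) * (dist w v / 2 * (Real.exp (2 * K x) - 1)) := by gcongr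
      _ = dist w v / 2 * (1 - Real.exp (-(2 * K x))) := by
        have : Real.exp (-(2 * K x)) * Real.exp (2 * K x) = 1 := by
          rw [← Real.exp_add]; simp
        linear_combination (dist w v / 2) * this
      _ ≤ dist w v / 2 * 1 := by
        gcongr
        linarith [Real.exp_pos (-(2 * K x))]
      _ = _ := by push_cast; ring
  have hfix := hS.fixedPoint_isFixedPt
  set w := ContractingWith.fixedPoint S hS
  refine ⟨ext w, extc w, fun x hx => ?_, fun ψ hψ hψe x hx => ?_⟩
  · have h1 : S w ⟨x, hx⟩ = w ⟨x, hx⟩ := by rw [hfix]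
    simp only [S, ContinuousMap.coe_mk] at h1
    have h2 : ext w x = Real.exp (2 * K x) * w ⟨x, hx⟩ := by
      simp only [ext]; rw [projIcc_of_mem _ hx]
    rw [h2, ← h1, ← mul_assoc, ← Real.exp_add]; simp
  · let v : C(Icc (0:ℝ) 1, ℝ) := ⟨fun x => Real.exp (-(2 * K x)) * ψ x, by
      have h3 : Continuous fun x : Icc (0:ℝ) 1 => ψ x :=
        continuousOn_iff_continuous_domRestrict.1 hψ
      have h4 : Continuous fun x : Icc (0:ℝ) 1 => Real.exp (-(2 * K x)) := by fun_prop
      exact h4.mul h3⟩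
    have hext : ∀ y ∈ Icc (0:ℝ) 1, ext v y = ψ y := fun y hy => by
      simp only [ext, v]; rw [projIcc_of_mem _ hy]
      simp only [ContinuousMap.coe_mk]
      rw [← mul_assoc, ← Real.exp_add]; simp
    have hv : Function.IsFixedPt S v := by
      ext ⟨y, hy⟩
      simp only [S, v, ContinuousMap.coe_mk]
      rw [hψe y hy]
      congr 2
      apply intervalIntegral.integral_congr
      intro t ht
      rw [uIcc_of_le hy.1] at ht
      have := hext t ⟨ht.1, ht.2.trans hy.2⟩
      simp only [← this]; rfl
    have : v = w := hS.fixedPoint_unique hv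
    rw [← hext x hx, this]

lemma cos_pow_int_tendsto (a b : ℝ) :
    Tendsto (fun n : ℕ => ∫ t in a..b, (Real.cos t ^ 2) ^ n) atTop (𝓝 0) := by
  have : (0:ℝ) = ∫ t in a..b, (0:ℝ) := by simp
  rw [this]
  apply intervalIntegral.tendsto_integral_filter_of_dominated_convergence (fun _ => (1:ℝ))
  · exact Eventually.of_forall fun n => Continuous.aestronglyMeasurable (by fun_prop)
  · refine Eventually.of_forall fun n => Eventually.of_forall fun t _ => ?_
    rw [Real.norm_eq_abs, abs_of_nonneg (by positivity)]
    exact pow_le_one₀ (by positivity) (Real.cos_sq_le_one t)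
  · simp
  · have hc : (range fun n : ℤ => (n:ℝ) * π).Countable := countable_range _
    filter_upwards [hc.ae_notMem volume] with t ht _
    apply tendsto_pow_atTop_nhds_zero_of_lt_one (by positivity)
    have : Real.sin t ≠ 0 := fun h => ht (by
      obtain ⟨n, hn⟩ := Real.sin_eq_zero_iff.1 h
      exact ⟨n, hn⟩)
    have h2 : 0 < Real.sin t ^ 2 := by positivity
    nlinarith [Real.sin_sq_add_cos_sq t]

lemma inv_int_tendsto (r : ℝ → ℝ) (hr : Integrable r)
    (hpos : ∀ᵐ t, t ∈ Ioc (0:ℝ) 1 → 0 < r t) :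
    Tendsto (fun n : ℕ => ∫ t in (0:ℝ)..1, (1 + (n:ℝ) * r t)⁻¹) atTop (𝓝 0) := by
  suffices h : Tendsto (fun n : ℕ => ∫ t in (0:ℝ)..1, (1 + (n:ℝ) * r t)⁻¹) atTop
      (𝓝 (∫ t in (0:ℝ)..1, (0:ℝ))) by simpa using h
  apply intervalIntegral.tendsto_integral_filter_of_dominated_convergence (fun _ => (1:ℝ))
  · refine Eventually.of_forall fun n => ?_
    have h := ((hr.aestronglyMeasurable.aemeasurable.const_mul (n:ℝ)).const_add 1).inv
    exact h.aestronglyMeasurable.restrict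
  · refine Eventually.of_forall fun n => ?_
    filter_upwards [hpos] with t ht ht'
    rw [uIoc_of_le zero_le_one] at ht'
    have := ht ht'
    have h1 : (0:ℝ) ≤ n * r t := by positivity
    rw [Real.norm_eq_abs, abs_of_nonneg (by positivity)]
    exact inv_le_one_of_one_le₀ (by linarith)
  · simp
  · filter_upwards [hpos] with t ht ht'
    rw [uIoc_of_le zero_le_one] at ht'
    have := ht ht'
    apply Tendsto.inv_tendsto_atTop
    apply tendsto_atTop_add_const_left
    exact tendsto_natCast_atTop_atTop.atTop_mul_const this

lemma trig_lip (y z : ℝ) : |Real.sin y ^ 2 - Real.sin z ^ 2| ≤ |y - z| := by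
  have h : Real.sin y ^ 2 - Real.sin z ^ 2 = Real.sin (y - z) * Real.sin (y + z) := by
    rw [Real.sin_sub, Real.sin_add]
    nlinarith [Real.sin_sq_add_cos_sq y, Real.sin_sq_add_cos_sq z,
      congrArg (fun s => s * Real.sin y ^ 2) (Real.sin_sq_add_cos_sq z),
      congrArg (fun s => s * Real.sin z ^ 2) (Real.sin_sq_add_cos_sq y)]
  rw [h, abs_mul]
  have h1 : |Real.sin (y - z)| ≤ |y - z| := Real.abs_sin_le_abs
  have h2 := Real.abs_sin_le_one (y + z)
  nlinarith [abs_nonneg (Real.sin (y - z)), abs_nonneg (y - z)]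

lemma growth (r : ℝ → ℝ) (hr : Integrable r) (I : ℝ → ℝ) (hI : ∀ᵐ t, t ∈ Ioc (0:ℝ) 1 → I t = 1)
    (hpos : ∀ᵐ t, t ∈ Ioc (0:ℝ) 1 → 0 < r t) (c M : ℝ) :
    ∃ L : ℝ, ∀ lam, L ≤ lam → ∀ u : ℝ → ℝ, Continuous u →
      Integrable (fun t => I t * Real.cos (u t) ^ 2 + lam * r t * Real.sin (u t) ^ 2) →
      (∀ x ∈ Icc (0:ℝ) 1, u x = c + ∫ t in (0:ℝ)..x,
        (I t * Real.cos (u t) ^ 2 + lam * r t * Real.sin (u t) ^ 2)) → M ≤ u 1 := by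
  obtain ⟨n, hn⟩ := ((cos_pow_int_tendsto c M).eventually (gt_mem_nhds (show (0:ℝ) < 1 / 2 by norm_num))).exists
  have hn1 : (0:ℝ) < n + 1 := by positivity
  obtain ⟨N, hN⟩ := ((inv_int_tendsto r hr hpos).eventually
    (gt_mem_nhds (show (0:ℝ) < 1 / (4 * (n + 1)) by positivity))).exists
  set d := ∫ t in (0:ℝ)..1, (1 + (N:ℝ) * r t)⁻¹
  refine ⟨max 1 (N * (M - c) * (4 * (n + 1))), fun lam hlam u hu hint he => ?_⟩
  by_contra hM
  push Not at hM
  have hl1 : 1 ≤ lam := (le_max_left _ _).trans hlam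
  have hl2 : N * (M - c) * (4 * (n + 1)) ≤ lam := (le_max_right _ _).trans hlam
  set f : ℝ → ℝ := fun t => I t * Real.cos (u t) ^ 2 + lam * r t * Real.sin (u t) ^ 2 with hf
  have hGd : ∀ y, HasDerivAt (fun y => ∫ t in (0:ℝ)..y, (Real.cos t ^ 2) ^ n)
      ((Real.cos y ^ 2) ^ n) y := fun y => by
    exact (show Continuous fun t : ℝ => (Real.cos t ^ 2) ^ n by fun_prop).integral_hasStrictDerivAt 0 y |>.hasDerivAt
  have hrs : IntervalIntegrable (fun t => r t * Real.sin (u t) ^ 2) volume 0 1 :=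
    hr.intervalIntegrable.mul_continuousOn (by fun_prop)
  have hch := chain_int hint c hGd (by fun_prop) 1
  rw [← he 1 (by simp)] at hch
  have hcont : Continuous fun t => (Real.cos t ^ 2) ^ n := by fun_prop
  rw [intervalIntegral.integral_interval_sub_left (hcont.intervalIntegrable _ _)
    (hcont.intervalIntegrable _ _)] at hch
  have h1 : ∫ t in c..(u 1), (Real.cos t ^ 2) ^ n ≤ ∫ t in c..M, (Real.cos t ^ 2) ^ n := by
    rw [← intervalIntegral.integral_add_adjacent_intervals (b := u 1)
      (hcont.intervalIntegrable c _) (hcont.intervalIntegrable _ M)]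
    have : 0 ≤ ∫ t in (u 1)..M, (Real.cos t ^ 2) ^ n :=
      intervalIntegral.integral_nonneg hM.le fun t _ => by positivity
    linarith
  -- lower bound
  have h2 : ∫ t in (0:ℝ)..1, (1 - (n + 1) * Real.sin (u t) ^ 2) ≤
      ∫ t in (0:ℝ)..1, (Real.cos (c + ∫ s in (0:ℝ)..t, f s) ^ 2) ^ n * f t := by
    apply intervalIntegral.integral_mono_ae_restrict zero_le_one
    · exact Continuous.intervalIntegrable (by fun_prop) _ _
    · refine hint.intervalIntegrable.continuousOn_mul ?_
      have : Continuous fun t => ∫ s in (0:ℝ)..t, f s :=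
        intervalIntegral.continuous_primitive (fun a b => hint.intervalIntegrable) 0
      fun_prop
    · rw [EventuallyLE, ae_restrict_iff' measurableSet_Icc]
      have h0 : ∀ᵐ t : ℝ, t ≠ 0 := by simp [ae_iff, measure_singleton]
      filter_upwards [hI, hpos, h0] with t hIt hrt ht0 ht
      have ht' : t ∈ Ioc (0:ℝ) 1 := ⟨lt_of_le_of_ne ht.1 (Ne.symm ht0), ht.2⟩
      rw [← he t ht]
      simp only [hf]
      rw [hIt ht', one_mul]
      have hr0 := hrt ht'
      have hb := one_add_mul_le_pow (a := -Real.sin (u t) ^ 2)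
        (by nlinarith [Real.sin_sq_le_one (u t)]) (n + 1)
      have hcs : 1 + -Real.sin (u t) ^ 2 = Real.cos (u t) ^ 2 := by
        linarith [Real.sin_sq_add_cos_sq (u t)]
      rw [hcs, pow_succ (Real.cos (u t) ^ 2) n] at hb
      push_cast at hb
      have : 0 ≤ (Real.cos (u t) ^ 2) ^ n * (lam * r t * Real.sin (u t) ^ 2) := by positivity
      linarith
  have hs : ∫ t in (0:ℝ)..1, (1 - (n + 1) * Real.sin (u t) ^ 2) =
      1 - (n + 1) * ∫ t in (0:ℝ)..1, Real.sin (u t) ^ 2 := by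
    rw [intervalIntegral.integral_sub (by simp) (Continuous.intervalIntegrable (by fun_prop) _ _),
      intervalIntegral.integral_const_mul]
    simp
  have hinv : IntervalIntegrable (fun t => (1 + (N:ℝ) * r t)⁻¹) volume 0 1 := by
    refine IntervalIntegrable.mono_fun' (g := fun _ => (1:ℝ)) (by simp) ?_ ?_
    · have h := ((hr.aestronglyMeasurable.aemeasurable.const_mul (N:ℝ)).const_add 1).inv
      exact h.aestronglyMeasurable.restrict
    · rw [EventuallyLE, ae_restrict_iff' measurableSet_uIoc]
      filter_upwards [hpos] with t ht ht'
      rw [uIoc_of_le zero_le_one] at ht'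
      have := ht ht'
      have h1 : (0:ℝ) ≤ N * r t := by positivity
      rw [Real.norm_eq_abs, abs_of_nonneg (by positivity)]
      exact inv_le_one_of_one_le₀ (by linarith)
  have h3 : ∫ t in (0:ℝ)..1, Real.sin (u t) ^ 2 ≤
      d + N * ∫ t in (0:ℝ)..1, r t * Real.sin (u t) ^ 2 := by
    rw [← intervalIntegral.integral_const_mul, ← intervalIntegral.integral_add hinv (hrs.const_mul _)]
    apply intervalIntegral.integral_mono_ae_restrict zero_le_one
    · exact Continuous.intervalIntegrable (by fun_prop) _ _
    · exact hinv.add (hrs.const_mul _)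
    · rw [EventuallyLE, ae_restrict_iff' measurableSet_Icc]
      have h0 : ∀ᵐ t : ℝ, t ≠ 0 := by simp [ae_iff, measure_singleton]
      filter_upwards [hpos, h0] with t hrt ht0 ht
      have hr0 := hrt ⟨lt_of_le_of_ne ht.1 (Ne.symm ht0), ht.2⟩
      have hq : (0:ℝ) ≤ N * r t := by positivity
      have hs1 := Real.sin_sq_le_one (u t)
      have hs0 := sq_nonneg (Real.sin (u t))
      rw [← mul_assoc]
      generalize (N:ℝ) * r t = q at hq
      generalize Real.sin (u t) ^ 2 = s at hs1 hs0
      have : s - q * s ≤ (1 + q)⁻¹ := by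
        rw [← one_div, le_div_iff₀ (by positivity)]
        nlinarith [mul_nonneg hs0 (sq_nonneg q)]
      linarith
  have h4 : lam * ∫ t in (0:ℝ)..1, r t * Real.sin (u t) ^ 2 ≤ M - c := by
    have h5 : lam * ∫ t in (0:ℝ)..1, r t * Real.sin (u t) ^ 2 ≤ ∫ t in (0:ℝ)..1, f t := by
      rw [← intervalIntegral.integral_const_mul]
      apply intervalIntegral.integral_mono_ae_restrict zero_le_one (hrs.const_mul _)
        hint.intervalIntegrable
      rw [EventuallyLE, ae_restrict_iff' measurableSet_Icc]
      have h0 : ∀ᵐ t : ℝ, t ≠ 0 := by simp [ae_iff, measure_singleton]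
      filter_upwards [hI, h0] with t hIt ht0 ht
      simp only [hf]
      rw [hIt ⟨lt_of_le_of_ne ht.1 (Ne.symm ht0), ht.2⟩]
      nlinarith [sq_nonneg (Real.cos (u t))]
    have := he 1 (by simp)
    linarith
  set J := ∫ t in (0:ℝ)..1, r t * Real.sin (u t) ^ 2
  have hNJ : N * J ≤ 1 / (4 * (n + 1)) := by
    rw [le_div_iff₀ (by positivity)]
    have : lam * (N * J * (4 * (n + 1))) ≤ lam * 1 := by
      calc _ = (lam * J) * (N * (4 * (n + 1))) := by ring
        _ ≤ (M - c) * (N * (4 * (n + 1))) := by gcongr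
        _ ≤ lam * 1 := by linarith
    exact le_of_mul_le_mul_left this (by linarith)
  have h6 : (n + 1) * ∫ t in (0:ℝ)..1, Real.sin (u t) ^ 2 < 1 / 2 := by
    calc _ < (n + 1) * (1 / (4 * ((n:ℝ) + 1)) + 1 / (4 * (n + 1))) := by
          gcongr; linarith
      _ = 1 / 2 := by field_simp; norm_num
  linarith

theorem stmt_8 (ρ : ℝ → ℝ) (hρ : IntegrableOn ρ (Ioo (0:ℝ) 1))
    (hρpos : ∀ᵐ x ∂(volume.restrict (Ioo (0:ℝ) 1)), 0 < ρ x)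
    (θ₀ : ℝ) (hθ₀ : θ₀ ∈ Ioc (-(π / 2)) (π / 2)) :
    ∃ Θ : ℝ → ℝ → ℝ,
      (∀ lam : ℝ, 1 ≤ lam →
        (ContinuousOn (Θ lam) (Icc (0:ℝ) 1) ∧
          ∀ x ∈ Icc (0:ℝ) 1,
            Θ lam x = θ₀ + ∫ t in (0:ℝ)..x,
              (Real.cos (Θ lam t) ^ 2 + lam * ρ t * Real.sin (Θ lam t) ^ 2)) ∧
        (∀ ψ : ℝ → ℝ, ContinuousOn ψ (Icc (0:ℝ) 1) →
          (∀ x ∈ Icc (0:ℝ) 1,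
            ψ x = θ₀ + ∫ t in (0:ℝ)..x,
              (Real.cos (ψ t) ^ 2 + lam * ρ t * Real.sin (ψ t) ^ 2)) →
          ∀ x ∈ Icc (0:ℝ) 1, ψ x = Θ lam x)) ∧
      Tendsto (fun lam => Θ lam 1) atTop atTop := by
  set r : ℝ → ℝ := (Ioo (0:ℝ) 1).indicator ρ with hrdef
  set I : ℝ → ℝ := (Ioo (0:ℝ) 1).indicator (fun _ => (1:ℝ)) with hIdef
  have hr : Integrable r := (integrable_indicator_iff measurableSet_Ioo).2 hρ
  have hIi : Integrable I := (integrable_indicator_iff measurableSet_Ioo).2 (by simp)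
  have hI0 : ∀ t, 0 ≤ I t := fun t => indicator_nonneg (fun _ _ => zero_le_one) t
  have h1 : ∀ᵐ t : ℝ, t ≠ 1 := by simp [ae_iff, measure_singleton]
  have hI : ∀ᵐ t, t ∈ Ioc (0:ℝ) 1 → I t = 1 := by
    filter_upwards [h1] with t ht ht'
    have hm : t ∈ Ioo (0:ℝ) 1 := ⟨ht'.1, lt_of_le_of_ne ht'.2 ht⟩
    exact indicator_of_mem hm _
  have hrρ : ∀ᵐ t, t ∈ Ioc (0:ℝ) 1 → r t = ρ t := by
    filter_upwards [h1] with t ht ht'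
    have hm : t ∈ Ioo (0:ℝ) 1 := ⟨ht'.1, lt_of_le_of_ne ht'.2 ht⟩
    exact indicator_of_mem hm _
  have hpos : ∀ᵐ t, t ∈ Ioc (0:ℝ) 1 → 0 < r t := by
    rw [ae_restrict_iff' measurableSet_Ioo] at hρpos
    filter_upwards [hrρ, hρpos, h1] with t h2 h3 ht ht'
    rw [h2 ht']
    exact h3 ⟨ht'.1, lt_of_le_of_ne ht'.2 ht⟩
  have hconv : ∀ lam : ℝ, ∀ u : ℝ → ℝ, ∀ x ∈ Icc (0:ℝ) 1,
      ∫ t in (0:ℝ)..x, (I t * Real.cos (u t) ^ 2 + lam * r t * Real.sin (u t) ^ 2)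
        = ∫ t in (0:ℝ)..x, (Real.cos (u t) ^ 2 + lam * ρ t * Real.sin (u t) ^ 2) := by
    intro lam u x hx
    apply intervalIntegral.integral_congr_ae
    filter_upwards [hI, hrρ] with t h2 h3 ht
    rw [uIoc_of_le hx.1] at ht
    have ht' : t ∈ Ioc (0:ℝ) 1 := ⟨ht.1, ht.2.trans hx.2⟩
    rw [h2 ht', h3 ht', one_mul]
  have hint : ∀ lam : ℝ, ∀ u : ℝ → ℝ, Continuous u →
      Integrable (fun t => I t * Real.cos (u t) ^ 2 + lam * r t * Real.sin (u t) ^ 2) := by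
    intro lam u hu
    refine (hIi.mul_bdd (c := 1) (Continuous.aestronglyMeasurable (by fun_prop)) ?_).add
      ((hr.const_mul lam).mul_bdd (c := 1) (Continuous.aestronglyMeasurable (by fun_prop)) ?_)
    · refine Eventually.of_forall fun t => ?_
      rw [Real.norm_eq_abs, abs_of_nonneg (by positivity)]
      exact Real.cos_sq_le_one _
    · refine Eventually.of_forall fun t => ?_
      rw [Real.norm_eq_abs, abs_of_nonneg (by positivity)]
      exact Real.sin_sq_le_one _
  have hex : ∀ lam : ℝ, _ := fun lam => picard_L1
    (F := fun t y => I t * Real.cos y ^ 2 + lam * r t * Real.sin y ^ 2)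
    (k := fun t => I t + |lam * r t|) (hIi.add (hr.const_mul lam).abs)
    (fun t => add_nonneg (hI0 t) (abs_nonneg _)) (hint lam)
    (fun t y z => by
      have e : I t * Real.cos y ^ 2 + lam * r t * Real.sin y ^ 2 -
          (I t * Real.cos z ^ 2 + lam * r t * Real.sin z ^ 2)
          = (lam * r t - I t) * (Real.sin y ^ 2 - Real.sin z ^ 2) := by
        rw [Real.cos_sq', Real.cos_sq']; ring
      rw [e, abs_mul]
      refine mul_le_mul ?_ (trig_lip y z) (abs_nonneg _) (add_nonneg (hI0 t) (abs_nonneg _))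
      have := abs_sub (lam * r t) (I t)
      rw [abs_of_nonneg (hI0 t)] at this
      linarith) θ₀
  choose Θ hc he hu using hex
  refine ⟨Θ, fun lam _ => ⟨⟨(hc lam).continuousOn, fun x hx => ?_⟩, fun ψ hψ hψe x hx => ?_⟩, ?_⟩
  · rw [← hconv lam _ x hx]; exact he lam x hx
  · refine hu lam ψ hψ (fun y hy => ?_) x hx
    rw [hconv lam _ y hy]; exact hψe y hy
  · rw [tendsto_atTop]
    intro M
    obtain ⟨L, hL⟩ := growth r hr I hI hpos θ₀ M
    filter_upwards [eventually_ge_atTop L] with lam hlam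
    exact hL lam hlam (Θ lam) (hc lam) (hint lam _ (hc lam)) (he lam)
end

section
/- Let p ∈ (1,∞]. Let (λ_n)_{n≥0} be real numbers for which there exist C₀ > 0 and N ∈ ℕ with λ_n ≥ C₀ n for all n ≥ N. Let (e_n)_{n≥0} be functions in W^{2,p}(0,1) with ‖e_n‖_{W^{2,p}(0,1)} ≤ C (1 + |λ_n|^{3/2}) for all n, for some C > 0, and let (c_n)_{n≥0} be real numbers with Σ_{n≥0} |c_n|² < ∞. Then for every 0 < ε < τ, the series u(t) = Σ_{n≥0} c_n e^{−λ_n t} e_n converges in W^{2,p}(0,1) for each t ∈ [ε,τ], the map t ↦ u(t) is infinitely differentiable from [ε,τ] to W^{2,p}(0,1) with u^{(k)}(t) = Σ_{n≥0} c_n (−λ_n)^k e^{−λ_n t} e_n, and there exist constants M, δ > 0 such that ‖u^{(k)}(t)‖_{W^{2,p}(0,1)} ≤ M k! / δ^k for all t ∈ [ε,τ] and all k ≥ 0; that is, u ∈ G¹([ε,τ], W^{2,p}(0,1)). -/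
open MeasureTheory Set Filter Topology

/-- pointwise bound on the coefficients -/
lemma aux_bound (x C δ η T t : ℝ) (hC : 0 < C) (hδ : 0 < δ) (ht : η < t) (htT : t < T) (hη : 0 < η)
    (k : ℕ) :
    |x| ^ k * Real.exp (-x * t) * (C * (1 + |x| ^ ((3:ℝ) / 2))) ≤
      C * (2 + 2 / δ ^ 2) * Real.exp (2 * δ * |x| - x * η + (|x| - x) * T)
        * (Nat.factorial k / δ ^ k) := by
  have hx := abs_nonneg x
  have hpow : ∀ j : ℕ, |x| ^ j ≤ Nat.factorial j / δ ^ j * Real.exp (δ * |x|) := by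
    intro j
    have h := Real.pow_div_factorial_le_exp (δ * |x|) (by positivity) j
    have hf : (0:ℝ) < Nat.factorial j := by positivity
    rw [div_le_iff₀ hf, mul_pow] at h
    rw [div_mul_eq_mul_div, le_div_iff₀ (by positivity)]
    linarith
  have h32 : |x| ^ ((3:ℝ) / 2) ≤ 1 + |x| ^ 2 := by
    rcases le_total |x| 1 with h | h
    · have := Real.rpow_le_one hx h (by norm_num : (0:ℝ) ≤ 3 / 2)
      nlinarith [sq_nonneg |x|]
    · have := Real.rpow_le_rpow_of_exponent_le h (by norm_num : (3:ℝ) / 2 ≤ (2:ℕ))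
      rw [Real.rpow_natCast] at this
      linarith
  have h2 := hpow 2
  have he1 : 1 ≤ Real.exp (δ * |x|) := Real.one_le_exp (by positivity)
  have hA : C * (1 + |x| ^ ((3:ℝ) / 2)) ≤ C * (2 + 2 / δ ^ 2) * Real.exp (δ * |x|) := by
    rw [mul_assoc]
    refine mul_le_mul_of_nonneg_left ?_ hC.le
    norm_num at h2
    rw [sq_abs] at h32
    linarith
  have hE : Real.exp (-x * t) ≤ Real.exp (- x * η + (|x| - x) * T) := by
    apply Real.exp_le_exp.2
    rcases le_total 0 x with h | h
    · rw [abs_of_nonneg h]; nlinarith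
    · rw [abs_of_nonpos h]; nlinarith
  calc |x| ^ k * Real.exp (-x * t) * (C * (1 + |x| ^ ((3:ℝ) / 2)))
      ≤ (Nat.factorial k / δ ^ k * Real.exp (δ * |x|)) * Real.exp (- x * η + (|x| - x) * T)
          * (C * (2 + 2 / δ ^ 2) * Real.exp (δ * |x|)) := by
        have := hpow k
        gcongr
    _ = C * (2 + 2 / δ ^ 2) * (Real.exp (δ * |x|) * Real.exp (- x * η + (|x| - x) * T)
          * Real.exp (δ * |x|)) * (Nat.factorial k / δ ^ k) := by ring
    _ = _ := by
        rw [← Real.exp_add, ← Real.exp_add]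
        congr 3
        ring

theorem stmt_15 (p : ENNReal) (hp : 1 < p)
    (B : Type*) [NormedAddCommGroup B] [NormedSpace ℝ B] [CompleteSpace B]
    (lam : ℕ → ℝ) (C₀ : ℝ) (hC₀ : 0 < C₀) (N : ℕ) (hlin : ∀ n : ℕ, N ≤ n → C₀ * n ≤ lam n)
    (e : ℕ → B) (C : ℝ) (hC : 0 < C)
    (he : ∀ n : ℕ, ‖e n‖ ≤ C * (1 + |lam n| ^ ((3:ℝ) / 2)))
    (c : ℕ → ℝ) (hc : Summable fun n => |c n| ^ 2)
    (ε τ : ℝ) (hε : 0 < ε) (hετ : ε < τ) :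
    (∀ t ∈ Icc ε τ, Summable fun n : ℕ => (c n * Real.exp (-(lam n) * t)) • e n) ∧
    ContDiffOn ℝ (⊤ : ℕ∞)
      (fun t : ℝ => ∑' n : ℕ, (c n * Real.exp (-(lam n) * t)) • e n) (Icc ε τ) ∧
    (∀ k : ℕ, ∀ t ∈ Icc ε τ,
      iteratedDerivWithin k
          (fun t : ℝ => ∑' n : ℕ, (c n * Real.exp (-(lam n) * t)) • e n) (Icc ε τ) t
        = ∑' n : ℕ, (c n * (-(lam n)) ^ k * Real.exp (-(lam n) * t)) • e n) ∧
    (∃ M δ : ℝ, 0 < M ∧ 0 < δ ∧ ∀ k : ℕ, ∀ t ∈ Icc ε τ,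
      ‖iteratedDerivWithin k
          (fun t : ℝ => ∑' n : ℕ, (c n * Real.exp (-(lam n) * t)) • e n) (Icc ε τ) t‖
        ≤ M * (Nat.factorial k : ℝ) / δ ^ k) := by
  have main : ∃ K : ℕ → ℝ, ∃ δ : ℝ, 0 < δ ∧ Summable K ∧ ∀ k n : ℕ, ∀ t ∈ Ioo (ε / 2) (τ + 1),
      ‖(c n * (-(lam n)) ^ k * Real.exp (-(lam n) * t)) • e n‖
        ≤ K n * (Nat.factorial k / δ ^ k) := by
    refine ⟨fun n => |c n| * (C * (2 + 2 / (ε / 16) ^ 2) *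
      Real.exp (2 * (ε / 16) * |lam n| - lam n * (ε / 2) + (|lam n| - lam n) * (τ + 1))),
      ε / 16, by positivity, ?_, ?_⟩
    · have hgeo : Summable fun n : ℕ => Real.exp (-(ε / 4 * C₀)) ^ n :=
        summable_geometric_of_lt_one (Real.exp_pos _).le
          (Real.exp_lt_one_iff.mpr (by have := mul_pos hε hC₀; linarith))
      have hg2 := hgeo.mul_left ((1 + ∑' n, |c n| ^ 2) * (C * (2 + 2 / (ε / 16) ^ 2)))
      refine Summable.of_norm_bounded_eventually_nat hg2 ?_
      filter_upwards [eventually_ge_atTop N] with n hn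
      have hl := hlin n hn
      have hl0 : 0 ≤ lam n := le_trans (by positivity) hl
      have hcn : |c n| ≤ 1 + ∑' n, |c n| ^ 2 := by
        have := hc.le_tsum n (fun j _ => by positivity)
        nlinarith [sq_nonneg (|c n| - 1), abs_nonneg (c n)]
      rw [Real.norm_of_nonneg (by positivity), mul_assoc (1 + ∑' n, |c n| ^ 2),
        ← Real.exp_nat_mul]
      have hT : 0 ≤ 1 + ∑' n, |c n| ^ 2 := (abs_nonneg _).trans hcn
      have hexp : 2 * (ε / 16) * |lam n| - lam n * (ε / 2) + (|lam n| - lam n) * (τ + 1)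
          ≤ n * (-(ε / 4 * C₀)) := by
        rw [abs_of_nonneg hl0]
        nlinarith
      gcongr
    · intro k n t ht
      have h := aux_bound (lam n) C (ε / 16) (ε / 2) (τ + 1) t hC (by positivity) ht.1 ht.2
        (by positivity) k
      rw [norm_smul, norm_mul, norm_mul, norm_pow, norm_neg, Real.norm_eq_abs, Real.norm_eq_abs,
        Real.norm_of_nonneg (Real.exp_pos _).le]
      calc |c n| * |lam n| ^ k * Real.exp (-lam n * t) * ‖e n‖
          ≤ |c n| * |lam n| ^ k * Real.exp (-lam n * t) * (C * (1 + |lam n| ^ ((3:ℝ) / 2))) := by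
            have := he n
            gcongr
        _ = |c n| * (|lam n| ^ k * Real.exp (-lam n * t) * (C * (1 + |lam n| ^ ((3:ℝ) / 2)))) := by
            ring
        _ ≤ _ := mul_le_mul_of_nonneg_left h (abs_nonneg _)
        _ = _ := by ring
  obtain ⟨K, δ, hδ, hK, hb⟩ := main
  have hsub : Icc ε τ ⊆ Ioo (ε / 2) (τ + 1) := fun t ht => ⟨by linarith [ht.1], by linarith [ht.2]⟩
  have hsum : ∀ k : ℕ, ∀ t ∈ Ioo (ε / 2) (τ + 1), Summable fun n : ℕ =>
      (c n * (-(lam n)) ^ k * Real.exp (-(lam n) * t)) • e n := fun k t ht =>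
    Summable.of_norm_bounded (hK.mul_right _) (fun n => hb k n t ht)
  have hder : ∀ k : ℕ, ∀ t ∈ Ioo (ε / 2) (τ + 1), HasDerivAt
      (fun t => ∑' n : ℕ, (c n * (-(lam n)) ^ k * Real.exp (-(lam n) * t)) • e n)
      (∑' n : ℕ, (c n * (-(lam n)) ^ (k + 1) * Real.exp (-(lam n) * t)) • e n) t := by
    intro k t ht
    refine hasDerivAt_tsum_of_isPreconnected (hK.mul_right _) isOpen_Ioo isPreconnected_Ioo
      (fun n y hy => ?_) (fun n y hy => hb (k + 1) n y hy) ht (hsum k t ht) ht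
    have h1 : HasDerivAt (fun y : ℝ => c n * (-(lam n)) ^ k * Real.exp (-(lam n) * y))
        (c n * (-(lam n)) ^ k * (Real.exp (-(lam n) * y) * (-(lam n) * 1))) y :=
      (((hasDerivAt_id y).const_mul (-(lam n))).exp).const_mul _
    have h2 := h1.smul_const (e n)
    convert h2 using 2
    ring
  have hF0 : (fun t : ℝ => ∑' n : ℕ, (c n * Real.exp (-(lam n) * t)) • e n) =
      fun t : ℝ => ∑' n : ℕ, (c n * (-(lam n)) ^ 0 * Real.exp (-(lam n) * t)) • e n := by
    simp
  have hu := uniqueDiffOn_Icc hετ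
  have hit : ∀ k : ℕ, ∀ t ∈ Icc ε τ,
      iteratedDerivWithin k
          (fun t : ℝ => ∑' n : ℕ, (c n * Real.exp (-(lam n) * t)) • e n) (Icc ε τ) t
        = ∑' n : ℕ, (c n * (-(lam n)) ^ k * Real.exp (-(lam n) * t)) • e n := by
    intro k
    induction k with
    | zero => intro t ht; simp
    | succ k ih =>
      intro t ht
      rw [iteratedDerivWithin_succ, derivWithin_congr ih (ih t ht)]
      exact (hder k t (hsub ht)).hasDerivWithinAt.derivWithin (hu t ht)
  refine ⟨fun t ht => by simpa using hsum 0 t (hsub ht), ?_, hit, ?_⟩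
  · refine contDiffOn_of_differentiableOn_deriv fun m _ => ?_
    refine DifferentiableOn.congr (fun t ht => ?_) (hit m)
    exact (hder m t (hsub ht)).differentiableAt.differentiableWithinAt
  · refine ⟨|∑' n, K n| + 1, δ, by positivity, hδ, fun k t ht => ?_⟩
    rw [hit k t ht]
    have h := tsum_of_norm_bounded (hK.mul_right (Nat.factorial k / δ ^ k : ℝ)).hasSum
      (fun n => hb k n t (hsub ht))
    refine h.trans ?_
    rw [tsum_mul_right, mul_div_assoc]
    refine mul_le_mul_of_nonneg_right ?_ (by positivity)
    linarith [le_abs_self (∑' n, K n)]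
end
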